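/- Let D be an integral domain and ⋆ a semistar operation on D. Then D is a ⋆-Dedekind domain if and only if every nonzero quasi-⋆̃-prime ideal of D is quasi-⋆̃-invertible. -/

import Mathlib

open scoped Pointwise

section SemistarDefs

variable {D : Type*} [CommRing D] [IsDomain D]
variable {K : Type*} [Field K] [Algebra D K] [IsFractionRing D K]

/-- `star` is a semistar operation on the integral domain `D` with quotient field `K`:
a map on (nonzero) `D`-submodules of `K` satisfying `(xE)^⋆ = x·E^⋆`, monotonicity,
extensivity and idempotence. -/
structure IsSemistarOperation (star : Submodule D K → Submodule D K) : Prop where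
  ne_bot : ∀ {E : Submodule D K}, E ≠ ⊥ → star E ≠ ⊥
  map_smul : ∀ (x : K), x ≠ 0 → ∀ {E : Submodule D K}, E ≠ ⊥ →
    star (Submodule.map (LinearMap.mulLeft D x) E) = Submodule.map (LinearMap.mulLeft D x) (star E)
  mono : ∀ {E F : Submodule D K}, E ≠ ⊥ → F ≠ ⊥ → E ≤ F → star E ≤ star F
  le_star : ∀ {E : Submodule D K}, E ≠ ⊥ → E ≤ star E
  star_star : ∀ {E : Submodule D K}, E ≠ ⊥ → star (star E) = star E

/-- The image in `K` of an ideal `I` of `D`, as a `D`-submodule of `K`. -/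
def idealExt (K : Type*) [Field K] [Algebra D K] (I : Ideal D) : Submodule D K :=
  Submodule.map (Algebra.linearMap D K) I

/-- `I` is a quasi-⋆-ideal: a nonzero ideal of `D` with `I = I^⋆ ∩ D`. -/
def QuasiStarIdeal (star : Submodule D K → Submodule D K) (I : Ideal D) : Prop :=
  I ≠ ⊥ ∧ Submodule.comap (Algebra.linearMap D K) (star (idealExt K I)) = I

/-- `P` is a quasi-⋆-prime: a prime ideal which is a quasi-⋆-ideal. -/
def QuasiStarPrime (star : Submodule D K → Submodule D K) (P : Ideal D) : Prop :=
  P.IsPrime ∧ QuasiStarIdeal star P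

/-- `M` is a quasi-⋆-maximal ideal: maximal in the set of proper quasi-⋆-ideals of `D`. -/
def QuasiStarMaximal (star : Submodule D K → Submodule D K) (M : Ideal D) : Prop :=
  QuasiStarIdeal star M ∧ M ≠ ⊤ ∧
    ∀ J : Ideal D, QuasiStarIdeal star J → J ≠ ⊤ → M ≤ J → J = M

/-- The finite-type semistar operation `⋆_f` associated to `⋆`:
`E^{⋆_f} = ⋃ { F^⋆ : F nonzero finitely generated, F ⊆ E }`. -/
def finTypeOp (star : Submodule D K → Submodule D K) : Submodule D K → Submodule D K :=
  fun E => ⨆ (F : Submodule D K) (_ : F ≠ ⊥) (_ : F.FG) (_ : F ≤ E), star F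

/-- The extension `E·D_Q` of a `D`-submodule `E` of `K` to the localization of `D` at
(the complement of) `Q`, described as `{ x ∈ K : s·x ∈ E for some s ∉ Q }`. -/
def extendToPrime (Q : Ideal D) (E : Submodule D K) : Submodule D K :=
  Submodule.span D {x : K | ∃ s : D, s ∉ Q ∧ algebraMap D K s * x ∈ E}

/-- The stable semistar operation of finite type `⋆̃` associated to `⋆`:
`E^⋆̃ = ⋂ { E·D_Q : Q a quasi-⋆_f-maximal ideal of D }`. -/
def stableOp (star : Submodule D K → Submodule D K) : Submodule D K → Submodule D K :=
  fun E => ⨅ (Q : Ideal D) (_ : QuasiStarMaximal (finTypeOp star) Q), extendToPrime Q E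

/-- A rank-one discrete valuation ring: a (domain which is a) local PID which is not a field. -/
def IsDVR (R : Type*) [CommRing R] : Prop :=
  ∃ h : IsDomain R, @IsDiscreteValuationRing R _ h

/-- A valuation domain. -/
def IsValuationDomain (R : Type*) [CommRing R] : Prop :=
  ∃ h : IsDomain R, @ValuationRing R _ h

/-- `D` is a ⋆-almost Dedekind domain: `D_M` is a rank-one discrete valuation ring for
every quasi-⋆_f-maximal ideal `M` of `D`. -/
def StarADD (star : Submodule D K → Submodule D K) : Prop :=
  ∀ (M : Ideal D) [M.IsPrime], QuasiStarMaximal (finTypeOp star) M →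
    IsDVR (Localization.AtPrime M)

/-- `D` is a Prüfer ⋆-multiplication domain: `D_M` is a valuation domain for every
quasi-⋆_f-maximal ideal `M` of `D`. -/
def StarPMD (star : Submodule D K → Submodule D K) : Prop :=
  ∀ (M : Ideal D) [M.IsPrime], QuasiStarMaximal (finTypeOp star) M →
    IsValuationDomain (Localization.AtPrime M)

/-- `D` is ⋆-Noetherian: ascending chain condition on quasi-⋆-ideals. -/
def StarNoetherian (star : Submodule D K → Submodule D K) : Prop :=
  ∀ c : ℕ →o Ideal D, (∀ n, QuasiStarIdeal star (c n)) → ∃ n, ∀ m, n ≤ m → c m = c n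

/-- `D` is a ⋆-Dedekind domain: ⋆-Noetherian and a P⋆MD. -/
def StarDedekind (star : Submodule D K → Submodule D K) : Prop :=
  StarNoetherian star ∧ StarPMD star

/-- `D` has the ⋆_f-finite character property: every nonzero element of `D` lies in only
finitely many quasi-⋆_f-maximal ideals. -/
def StarFiniteCharacter (star : Submodule D K → Submodule D K) : Prop :=
  ∀ d : D, d ≠ 0 → {M : Ideal D | QuasiStarMaximal (finTypeOp star) M ∧ d ∈ M}.Finite

/-- The `v`-operation `E ↦ (D : (D : E))`. -/
def vOp : Submodule D K → Submodule D K := fun E => 1 / (1 / E)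

/-- A nonzero `D`-submodule `E` of `K` is quasi-∗-invertible if `(E·(D^∗ : E))^∗ = D^∗`. -/
def QuasiStarInvertible (star : Submodule D K → Submodule D K) (E : Submodule D K) : Prop :=
  star (E * (star 1 / E)) = star (1 : Submodule D K)

/-- `D` has the ∗-cancellation law: for nonzero fractional ideals `A`, `B`, `C`,
`(AB)^∗ = (AC)^∗` implies `B^∗ = C^∗`. -/
def StarCancellation (star : Submodule D K → Submodule D K) : Prop :=
  ∀ A B C : Submodule D K, A ≠ ⊥ → B ≠ ⊥ → C ≠ ⊥ →
    IsFractional (nonZeroDivisors D) A → IsFractional (nonZeroDivisors D) B →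
    IsFractional (nonZeroDivisors D) C →
    star (A * B) = star (A * C) → star B = star C

/-- The ∗-dimension of `D`: the supremum of the lengths of chains of quasi-∗-prime ideals
of `D` (between `(0)` and a quasi-∗-prime). -/
noncomputable def starDim (star : Submodule D K → Submodule D K) : ℕ∞ :=
  ⨆ (k : ℕ) (_ : ∃ c : Fin k → Ideal D, StrictMono c ∧ ∀ i, QuasiStarPrime star (c i)),
    (k : ℕ∞)

/-- A submodule `T` of `K` (containing the image of an integral domain with quotient
field `K`) is integrally closed (in `K`) if every `x ∈ K` satisfying a monic polynomial
equation with coefficients in `T` belongs to `T`. -/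
def IntegrallyClosedSub (T : Submodule D K) : Prop :=
  ∀ x : K, (∃ (n : ℕ) (c : Fin n → K), (∀ i, c i ∈ T) ∧
    x ^ n = ∑ i : Fin n, c i * x ^ (i : ℕ)) → x ∈ T

/-- The content ideal `c(p)` of a polynomial: the ideal generated by its coefficients. -/
def contentIdeal (p : Polynomial D) : Ideal D := Ideal.span (Set.range p.coeff)

/-- The multiplicative set `N(⋆) = { h ∈ D[X] : h ≠ 0, c(h)^⋆ = D^⋆ }` (as a submonoid,
via the closure of this multiplicatively closed set). -/
noncomputable def nagataMonoid (star : Submodule D K → Submodule D K) : Submonoid (Polynomial D) :=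
  Submonoid.closure
    {p : Polynomial D | p ≠ 0 ∧ star (idealExt K (contentIdeal p)) = star (1 : Submodule D K)}

/-- The Nagata ring `Na(D,⋆) = D[X]_{N(⋆)}`. -/
abbrev NagataRing (star : Submodule D K → Submodule D K) :=
  Localization (nagataMonoid star)

/-- `V` is a valuation overring of `D` (inside the quotient field `K`): `D ⊆ V ⊆ K` and
for every nonzero `x ∈ K`, `x ∈ V` or `x⁻¹ ∈ V`. -/
def IsValuationOverring (D : Type*) [CommRing D] {K : Type*} [Field K] [Algebra D K]
    (V : Subring K) : Prop :=
  (∀ d : D, algebraMap D K d ∈ V) ∧ ∀ x : K, x ≠ 0 → (x ∈ V ∨ x⁻¹ ∈ V)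

/-- `V` is a ∗-valuation overring of `D`: a valuation overring such that `F^∗ ⊆ FV` for
every nonzero finitely generated `D`-submodule `F` of `K`. -/
def IsStarValuationOverring (star : Submodule D K → Submodule D K) (V : Subring K) : Prop :=
  IsValuationOverring D V ∧
    ∀ F : Submodule D K, F ≠ ⊥ → F.FG →
      star F ≤ Submodule.span D ((F : Set K) * (V : Set K))

/-- `D` is a Krull domain: there is a family of rank-one discrete valuation overrings of `D`
with quotient field `K` whose intersection is `D`, with finite character. -/
def IsKrullDomain (D : Type*) [CommRing D] (K : Type*) [Field K] [Algebra D K] : Prop :=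
  ∃ 𝒱 : Set (Subring K),
    (∀ V ∈ 𝒱, (∀ d : D, algebraMap D K d ∈ V) ∧ IsDVR V ∧
      ∀ x : K, ∃ a ∈ V, ∃ b ∈ V, b ≠ 0 ∧ x * b = a) ∧
    (⋂ V ∈ 𝒱, (V : Set K)) = Set.range (algebraMap D K) ∧
    ∀ d : D, d ≠ 0 → {V ∈ 𝒱 | ¬ ∃ y ∈ V, algebraMap D K d * y = 1}.Finite

end SemistarDefs

set_option linter.unusedSectionVars false

section Helpers

variable {D : Type*} [CommRing D] [IsDomain D]
variable {K : Type*} [Field K] [Algebra D K] [IsFractionRing D K]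

lemma mem_idealExt_iff {I : Ideal D} {x : D} :
    algebraMap D K x ∈ idealExt K I ↔ x ∈ I := by
  unfold idealExt
  constructor
  · rintro ⟨y, hy, h⟩
    have : y = x := IsFractionRing.injective D K h
    exact this ▸ hy
  · intro h
    exact ⟨x, h, rfl⟩

lemma mem_idealExt_exists {I : Ideal D} {y : K} (h : y ∈ idealExt K I) :
    ∃ x ∈ I, algebraMap D K x = y := by
  obtain ⟨x, hx, h⟩ := h
  exact ⟨x, hx, h⟩

lemma idealExt_mono {I J : Ideal D} (h : I ≤ J) : idealExt K I ≤ idealExt K J :=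
  Submodule.map_mono h

lemma idealExt_ne_bot {I : Ideal D} (h : I ≠ ⊥) : idealExt K I ≠ ⊥ := by
  obtain ⟨x, hx, h0⟩ := Submodule.exists_mem_ne_zero_of_ne_bot h
  intro hb
  have := (mem_idealExt_iff (K := K)).2 hx
  rw [hb, Submodule.mem_bot] at this
  exact h0 ((map_eq_zero_iff _ (IsFractionRing.injective D K)).1 this)

lemma algMap_ne_zero {x : D} (h : x ≠ 0) : algebraMap D K x ≠ 0 := fun h' =>
  h ((map_eq_zero_iff _ (IsFractionRing.injective D K)).1 h')

/-- closure of an ideal under the finite type operation, elementwise -/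
def SCl (star : Submodule D K → Submodule D K) (I : Ideal D) (x : D) : Prop :=
  ∃ F : Ideal D, F ≠ ⊥ ∧ F.FG ∧ F ≤ I ∧ algebraMap D K x ∈ star (idealExt K F)

lemma mem_finTypeOp_iff {star : Submodule D K → Submodule D K} (hs : IsSemistarOperation star)
    {I : Ideal D} (hI : I ≠ ⊥) {x : D} :
    algebraMap D K x ∈ finTypeOp star (idealExt K I) ↔ SCl star I x := by
  have key : finTypeOp star (idealExt K I) =
      ⨆ i : {F : Submodule D K // F ≠ ⊥ ∧ F.FG ∧ F ≤ idealExt K I}, star i.1 := by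
    simp [finTypeOp, iSup_subtype, iSup_and]
  obtain ⟨x0, hx0, h0⟩ := Submodule.exists_mem_ne_zero_of_ne_bot hI
  have hne : Nonempty {F : Submodule D K // F ≠ ⊥ ∧ F.FG ∧ F ≤ idealExt K I} := by
    refine ⟨⟨Submodule.span D {algebraMap D K x0}, ?_, Submodule.fg_span_singleton _, ?_⟩⟩
    · simpa using h0
    · rw [Submodule.span_singleton_le_iff_mem]
      exact mem_idealExt_iff.2 hx0
  have hdir : Directed (· ≤ ·)
      (fun i : {F : Submodule D K // F ≠ ⊥ ∧ F.FG ∧ F ≤ idealExt K I} => star i.1) := by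
    rintro ⟨F, hF, hFg, hFI⟩ ⟨G, hG, hGg, hGI⟩
    have hb : F ⊔ G ≠ ⊥ := fun h => hF (le_bot_iff.1 (h ▸ le_sup_left))
    exact ⟨⟨F ⊔ G, hb, hFg.sup hGg, sup_le hFI hGI⟩, hs.mono hF hb le_sup_left,
      hs.mono hG hb le_sup_right⟩
  rw [key, Submodule.mem_iSup_of_directed _ hdir]
  constructor
  · rintro ⟨⟨F, hF, hFg, hFI⟩, hx⟩
    have e : idealExt K (Submodule.comap (Algebra.linearMap D K) F) = F := by
      unfold idealExt
      rw [Submodule.map_comap_eq, inf_eq_right]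
      exact hFI.trans (LinearMap.map_le_range)
    refine ⟨Submodule.comap (Algebra.linearMap D K) F, ?_, ?_, ?_, ?_⟩
    · intro hb
      rw [hb] at e
      exact hF (by rw [← e]; simp [idealExt])
    · apply Submodule.fg_of_fg_map_injective (Algebra.linearMap D K) (IsFractionRing.injective D K)
      unfold idealExt at e
      rwa [e]
    · intro y hy
      exact mem_idealExt_iff.1 (hFI hy)
    · rwa [e]
  · rintro ⟨F, hF, hFg, hFI, hx⟩
    exact ⟨⟨idealExt K F, idealExt_ne_bot hF, Submodule.FG.map _ hFg, idealExt_mono hFI⟩, hx⟩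

lemma quasi_iff {star : Submodule D K → Submodule D K} (hs : IsSemistarOperation star)
    {I : Ideal D} : QuasiStarIdeal (finTypeOp star) I ↔ I ≠ ⊥ ∧ ∀ x, SCl star I x → x ∈ I := by
  unfold QuasiStarIdeal
  refine and_congr_right fun hI => ?_
  constructor
  · intro h x hx
    rw [← h]
    exact (mem_finTypeOp_iff hs hI).2 hx
  · intro h
    ext x
    constructor
    · intro hx
      exact h x ((mem_finTypeOp_iff hs hI).1 hx)
    · intro hx
      by_cases h0 : x = 0
      · subst h0; exact Submodule.zero_mem _
      refine (mem_finTypeOp_iff hs hI).2 ⟨Ideal.span {x}, by simpa using h0,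
        Submodule.fg_span_singleton _, by simpa [Ideal.span_le] using hx, ?_⟩
      exact hs.le_star (idealExt_ne_bot (by simpa using h0))
        (mem_idealExt_iff.2 (Ideal.mem_span_singleton_self x))

/-- scaling inside the star closure -/
lemma scale_mem {star : Submodule D K → Submodule D K} (hs : IsSemistarOperation star)
    {F G : Ideal D} (hF : F ≠ ⊥) {a : D} (ha : a ≠ 0) (hG : ∀ x ∈ F, a * x ∈ G) {y : K}
    (hy : y ∈ star (idealExt K F)) : algebraMap D K a * y ∈ star (idealExt K G) := by
  have h1 : algebraMap D K a * y ∈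
      star (Submodule.map (LinearMap.mulLeft D (algebraMap D K a)) (idealExt K F)) := by
    rw [hs.map_smul _ (algMap_ne_zero ha) (idealExt_ne_bot hF)]
    exact ⟨y, hy, rfl⟩
  have hle : Submodule.map (LinearMap.mulLeft D (algebraMap D K a)) (idealExt K F)
      ≤ idealExt K G := by
    rintro _ ⟨z, hz, rfl⟩
    obtain ⟨x, hx, rfl⟩ := mem_idealExt_exists hz
    simp only [LinearMap.mulLeft_apply]
    rw [← map_mul]
    exact mem_idealExt_iff.2 (hG x hx)
  have hb : Submodule.map (LinearMap.mulLeft D (algebraMap D K a)) (idealExt K F) ≠ ⊥ := by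
    obtain ⟨x, hx, h0⟩ := Submodule.exists_mem_ne_zero_of_ne_bot (idealExt_ne_bot (K := K) hF)
    intro h
    have : algebraMap D K a * x ∈
      Submodule.map (LinearMap.mulLeft D (algebraMap D K a)) (idealExt K F) := ⟨x, hx, rfl⟩
    rw [h, Submodule.mem_bot] at this
    exact mul_ne_zero (algMap_ne_zero ha) h0 this
  have hb' : idealExt K G ≠ ⊥ := fun h => hb (le_bot_iff.1 (h ▸ hle))
  exact hs.mono hb hb' hle h1

lemma idealExt_top : idealExt K (⊤ : Ideal D) = 1 := by
  ext y
  constructor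
  · intro h
    obtain ⟨x, -, rfl⟩ := mem_idealExt_exists h
    exact Submodule.algebraMap_mem x
  · intro h
    obtain ⟨x, rfl⟩ := Submodule.mem_one.1 h
    exact mem_idealExt_iff.2 trivial

/-- star of a principal ideal -/
lemma star_principal {star : Submodule D K → Submodule D K} (hs : IsSemistarOperation star)
    {a : D} (ha : a ≠ 0) {y : K} (hy : y ∈ star (idealExt K (Ideal.span {a}))) :
    ∃ z ∈ star (1 : Submodule D K), y = algebraMap D K a * z := by
  have e : idealExt K (Ideal.span {a}) =
      Submodule.map (LinearMap.mulLeft D (algebraMap D K a)) (idealExt K ⊤) := by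
    ext y
    constructor
    · intro h
      obtain ⟨x, hx, rfl⟩ := mem_idealExt_exists h
      obtain ⟨c, rfl⟩ := Ideal.mem_span_singleton.1 hx
      exact ⟨algebraMap D K c, mem_idealExt_iff.2 trivial, by simp⟩
    · rintro ⟨z, hz, rfl⟩
      obtain ⟨x, hx, rfl⟩ := mem_idealExt_exists hz
      simp only [LinearMap.mulLeft_apply]
      rw [← map_mul]
      exact mem_idealExt_iff.2 (Ideal.mem_span_singleton.2 ⟨x, rfl⟩)
  rw [e, hs.map_smul _ (algMap_ne_zero ha) (idealExt_ne_bot top_ne_bot), idealExt_top] at hy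
  obtain ⟨z, hz, rfl⟩ := hy
  exact ⟨z, hz, rfl⟩

lemma exists_of_chain {c : Set (Ideal D)} (hc : IsChain (· ≤ ·) c) (hne : c.Nonempty)
    {F : Ideal D} (hF : F.FG) (hle : F ≤ sSup c) : ∃ I ∈ c, F ≤ I := by
  have hcpt := (CompleteLattice.isCompactElement_iff_le_of_directed_sSup_le (Ideal D) F).1
    ((Submodule.fg_iff_compact F).1 hF)
  exact hcpt c hne hc.directedOn hle

/-- union of stars over a finite set -/
lemma fg_le_star {star : Submodule D K → Submodule D K} (hs : IsSemistarOperation star)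
    {I G : Ideal D} (hI : I ≠ ⊥) (hG : G.FG) (h : ∀ x ∈ G, SCl star I x) :
    ∃ F : Ideal D, F ≠ ⊥ ∧ F.FG ∧ F ≤ I ∧ idealExt K G ≤ star (idealExt K F) := by
  induction G, hG using Submodule.fg_induction with
  | singleton x =>
    obtain ⟨F, h1, h2, h3, h4⟩ := h x (Submodule.mem_span_singleton_self x)
    refine ⟨F, h1, h2, h3, ?_⟩
    intro y hy
    obtain ⟨z, hz, rfl⟩ := mem_idealExt_exists hy
    obtain ⟨c, rfl⟩ := Submodule.mem_span_singleton.1 hz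
    rw [smul_eq_mul, map_mul, ← Algebra.smul_def]
    exact Submodule.smul_mem _ _ h4
  | sup G₁ G₂ hG1 hG2 ih1 ih2 =>
    obtain ⟨F, h1, h2, h3, h4⟩ := ih1 fun x hx => h x (Submodule.mem_sup_left hx)
    obtain ⟨F', h1', h2', h3', h4'⟩ := ih2 fun x hx => h x (Submodule.mem_sup_right hx)
    have hb : F ⊔ F' ≠ ⊥ := fun h => h1 (le_bot_iff.1 (h ▸ le_sup_left))
    refine ⟨F ⊔ F', hb, Submodule.FG.sup h2 h2', sup_le h3 h3', ?_⟩
    unfold idealExt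
    rw [Submodule.map_sup]
    exact sup_le
      (h4.trans (hs.mono (idealExt_ne_bot h1) (idealExt_ne_bot hb) (idealExt_mono le_sup_left)))
      (h4'.trans (hs.mono (idealExt_ne_bot h1') (idealExt_ne_bot hb) (idealExt_mono le_sup_right)))

lemma SCl.mono {star : Submodule D K → Submodule D K} {I J : Ideal D} (h : I ≤ J) {x : D}
    (hx : SCl star I x) : SCl star J x := by
  obtain ⟨F, h1, h2, h3, h4⟩ := hx
  exact ⟨F, h1, h2, h3.trans h, h4⟩

lemma scl_of_one {star : Submodule D K → Submodule D K} {I : Ideal D} (h : SCl star I 1) (x : D) :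
    SCl star I x := by
  obtain ⟨F, h1, h2, h3, h4⟩ := h
  refine ⟨F, h1, h2, h3, ?_⟩
  have := Submodule.smul_mem _ x h4
  rwa [Algebra.smul_def, map_one, mul_one] at this

lemma scl_self {star : Submodule D K → Submodule D K} (hs : IsSemistarOperation star)
    {I : Ideal D} (hI : I ≠ ⊥) {x : D} (hx : x ∈ I) : SCl star I x := by
  by_cases h0 : x = 0
  · subst h0
    exact (mem_finTypeOp_iff hs hI).1 (by rw [map_zero]; exact Submodule.zero_mem _)
  exact ⟨Ideal.span {x}, by simpa using h0,
        Submodule.fg_span_singleton _, by simpa [Ideal.span_le] using hx,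
        hs.le_star (idealExt_ne_bot (by simpa using h0))
        (mem_idealExt_iff.2 (Ideal.mem_span_singleton_self x))⟩

lemma exists_maximal {star : Submodule D K → Submodule D K} (hs : IsSemistarOperation star)
    {J : Ideal D} (hJ : J ≠ ⊥) (h1 : ¬ SCl star J 1) :
    ∃ Q, QuasiStarMaximal (finTypeOp star) Q ∧ J ≤ Q := by
  obtain ⟨M, hJM, hM⟩ := zorn_le_nonempty₀ {I : Ideal D | ¬ SCl star I 1} (by
    intro c hc hch y hy
    refine ⟨sSup c, ?_, fun z hz => le_sSup hz⟩
    rintro ⟨F, h1, h2, h3, h4⟩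
    obtain ⟨I, hI, hFI⟩ := exists_of_chain hch ⟨y, hy⟩ h2 h3
    exact hc hI ⟨F, h1, h2, hFI, h4⟩) J h1
  have hMb : M ≠ ⊥ := fun h => hJ (le_bot_iff.1 (h ▸ hJM))
  refine ⟨M, ⟨?_, ?_, ?_⟩, hJM⟩
  · rw [quasi_iff hs]
    refine ⟨hMb, ?_⟩
    let M' : Ideal D := Submodule.comap (Algebra.linearMap D K) (finTypeOp star (idealExt K M))
    have hM' : ∀ x, x ∈ M' ↔ SCl star M x := fun x => mem_finTypeOp_iff hs hMb
    have hle : M ≤ M' := fun x hx => (hM' x).2 (scl_self hs hMb hx)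
    have hprop : ¬ SCl star M' 1 := by
      rintro ⟨G, g1, g2, g3, g4⟩
      obtain ⟨F, f1, f2, f3, f4⟩ := fg_le_star hs hMb g2 (fun x hx => (hM' x).1 (g3 hx))
      apply hM.prop
      refine ⟨F, f1, f2, f3, ?_⟩
      rw [← hs.star_star (idealExt_ne_bot f1)]
      exact hs.mono (idealExt_ne_bot g1) (hs.ne_bot (idealExt_ne_bot f1)) f4 g4
    intro x hx
    exact hM.le_of_ge hprop hle ((hM' x).2 hx)
  · rintro rfl
    exact hM.prop (scl_self hs hMb trivial)
  · intro I hI hIt hMI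
    rw [quasi_iff hs] at hI
    refine le_antisymm (hM.le_of_ge (fun h => hIt ?_) hMI) hMI
    exact (Ideal.eq_top_iff_one _).2 (hI.2 _ h)

lemma not_le_of_one {star : Submodule D K → Submodule D K} (hs : IsSemistarOperation star)
    {Q F : Ideal D} (hQ : QuasiStarMaximal (finTypeOp star) Q) (hF : SCl star F 1) : ¬ F ≤ Q :=
  fun h => hQ.2.1 ((Ideal.eq_top_iff_one _).2 (((quasi_iff hs).1 hQ.1).2 1 (hF.mono h)))

lemma maximal_prime {star : Submodule D K → Submodule D K} (hs : IsSemistarOperation star)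
    {Q : Ideal D} (hQ : QuasiStarMaximal (finTypeOp star) Q) : Q.IsPrime := by
  refine ⟨hQ.2.1, ?_⟩
  intro a b hab
  by_contra! hcon
  obtain ⟨ha, hb⟩ := hcon
  have hQ' := (quasi_iff hs).1 hQ.1
  have h1 : SCl star (Q ⊔ Ideal.span {a}) 1 := by
    by_contra h
    obtain ⟨Q', hQm, hle⟩ := exists_maximal hs
      (fun h => hQ'.1 (le_bot_iff.1 (h ▸ le_sup_left))) h
    have := hQ.2.2 Q' hQm.1 hQm.2.1 (le_sup_left.trans hle)
    apply ha
    rw [← this]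
    exact hle (Ideal.mem_sup_right (Ideal.mem_span_singleton_self a))
  obtain ⟨F, f1, f2, f3, f4⟩ := h1
  have hb0 : b ≠ 0 := by rintro rfl; exact hb Q.zero_mem
  apply hb
  apply hQ'.2
  have hle : Ideal.span {b} * F ≤ Q := by
    rw [Ideal.span_singleton_mul_le_iff]
    intro z hz
    obtain ⟨q, hq, r, hr, rfl⟩ := Submodule.mem_sup.1 (f3 hz)
    obtain ⟨c, rfl⟩ := Ideal.mem_span_singleton.1 hr
    have : b * (q + a * c) = b * q + c * (a * b) := by ring
    rw [this]
    exact Q.add_mem (Q.mul_mem_left _ hq) (Q.mul_mem_left _ hab)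
  refine ⟨Ideal.span {b} * F, ?_, (Submodule.fg_span_singleton b).mul f2, hle, ?_⟩
  · simpa [Ideal.mul_eq_bot] using ⟨hb0, f1⟩
  · have := scale_mem hs (G := Ideal.span {b} * F) f1 hb0
      (fun x hx => Ideal.mul_mem_mul (Ideal.mem_span_singleton_self b) hx) f4
    rwa [map_one, mul_one] at this

lemma mem_extend_iff {Q : Ideal D} (hQ : Q.IsPrime) {E : Submodule D K} {x : K} :
    x ∈ extendToPrime Q E ↔ ∃ s : D, s ∉ Q ∧ algebraMap D K s * x ∈ E := by
  constructor
  · intro h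
    unfold extendToPrime at h
    induction h using Submodule.span_induction with
    | mem x h => exact h
    | zero => exact ⟨1, fun h => hQ.ne_top ((Ideal.eq_top_iff_one _).2 h), by simp⟩
    | add x y _ _ hx hy =>
      obtain ⟨s, hs, hx⟩ := hx
      obtain ⟨t, ht, hy⟩ := hy
      refine ⟨s * t, fun h => (hQ.mem_or_mem h).elim hs ht, ?_⟩
      have : algebraMap D K (s * t) * (x + y) =
        t • (algebraMap D K s * x) + s • (algebraMap D K t * y) := by
        simp only [Algebra.smul_def, map_mul]; ring
      rw [this]
      exact E.add_mem (E.smul_mem _ hx) (E.smul_mem _ hy)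
    | smul c x _ hx =>
      obtain ⟨s, hs, hx⟩ := hx
      refine ⟨s, hs, ?_⟩
      have : algebraMap D K s * (c • x) = c • (algebraMap D K s * x) := by
        simp only [Algebra.smul_def]; ring
      rw [this]
      exact E.smul_mem _ hx
  · intro h
    exact Submodule.subset_span h

lemma mem_stable_iff {star : Submodule D K → Submodule D K} (hs : IsSemistarOperation star)
    {E : Submodule D K} {x : K} :
    x ∈ stableOp star E ↔ ∀ Q, QuasiStarMaximal (finTypeOp star) Q →
      ∃ s : D, s ∉ Q ∧ algebraMap D K s * x ∈ E := by
  simp only [stableOp, Submodule.mem_iInf]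
  exact forall₂_congr fun Q hQ => mem_extend_iff (maximal_prime hs hQ)

lemma loc_dvd {Q : Ideal D} [Q.IsPrime] {a b : D}
    (h : algebraMap D (Localization.AtPrime Q) a ∣ algebraMap D (Localization.AtPrime Q) b) :
    ∃ s ∉ Q, a ∣ s * b := by
  obtain ⟨y, hy⟩ := h
  obtain ⟨⟨c, s⟩, hc⟩ := IsLocalization.surj Q.primeCompl y
  refine ⟨s, s.2, c, ?_⟩
  apply IsLocalization.injective (Localization.AtPrime Q) Q.primeCompl_le_nonZeroDivisors
  rw [map_mul, map_mul, hy, ← hc]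
  ring

lemma fg_principal {Q : Ideal D} (hQ : Q.IsPrime)
    (hv : ∀ a b : D, ∃ s ∉ Q, a ∣ s * b ∨ b ∣ s * a) {F : Ideal D} (hF : F.FG) :
    ∃ f ∈ F, ∃ t ∉ Q, ∀ x ∈ F, f ∣ t * x := by
  induction F, hF using Submodule.fg_induction with
  | singleton x =>
    refine ⟨x, Submodule.mem_span_singleton_self x, 1,
      fun h => hQ.ne_top ((Ideal.eq_top_iff_one _).2 h), ?_⟩
    intro y hy
    rw [one_mul]
    exact Ideal.mem_span_singleton.1 hy
  | sup G₁ G₂ hG1 hG2 ih1 ih2 =>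
    obtain ⟨f, hf, t, ht, h⟩ := ih1
    obtain ⟨f', hf', t', ht', h'⟩ := ih2
    obtain ⟨s, hs, hd⟩ := hv f f'
    have hn : s * t * t' ∉ Q := fun h =>
      (hQ.mem_or_mem h).elim (fun h => (hQ.mem_or_mem h).elim hs ht) ht'
    rcases hd with hd | hd
    · refine ⟨f, Submodule.mem_sup_left hf, s * t * t', hn, ?_⟩
      intro x hx
      obtain ⟨y, hy, z, hz, rfl⟩ := Submodule.mem_sup.1 hx
      have e : s * t * t' * (y + z) = (s * t') * (t * y) + t * (s * (t' * z)) := by ring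
      rw [e]
      exact dvd_add ((h y hy).mul_left _) ((hd.trans (mul_dvd_mul_left s (h' z hz))).mul_left _)
    · refine ⟨f', Submodule.mem_sup_right hf', s * t * t', hn, ?_⟩
      intro x hx
      obtain ⟨y, hy, z, hz, rfl⟩ := Submodule.mem_sup.1 hx
      have e : s * t * t' * (y + z) = t' * (s * (t * y)) + (s * t) * (t' * z) := by ring
      rw [e]
      exact dvd_add ((hd.trans (mul_dvd_mul_left s (h y hy))).mul_left _) ((h' z hz).mul_left _)

lemma stable_mul_div_le {star : Submodule D K → Submodule D K} (hs : IsSemistarOperation star)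
    (E : Submodule D K) :
    stableOp star (E * (stableOp star 1 / E)) ≤ stableOp star 1 := by
  intro x hx
  rw [mem_stable_iff hs] at hx ⊢
  intro Q hQ
  obtain ⟨s, hsQ, h⟩ := hx Q hQ
  have hle : E * (stableOp star 1 / E) ≤ stableOp star 1 := by
    rw [mul_comm]
    exact Submodule.le_div_iff_mul_le.1 le_rfl
  obtain ⟨t, ht, h'⟩ := (mem_stable_iff hs).1 (hle h) Q hQ
  refine ⟨t * s, fun h => ((maximal_prime hs hQ).mem_or_mem h).elim ht hsQ, ?_⟩
  rwa [map_mul, mul_assoc]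

lemma invertible_iff {star : Submodule D K → Submodule D K} (hs : IsSemistarOperation star)
    (E : Submodule D K) :
    QuasiStarInvertible (stableOp star) E ↔ ∀ Q, QuasiStarMaximal (finTypeOp star) Q →
      ∃ t ∉ Q, algebraMap D K t ∈ E * (stableOp star 1 / E) := by
  unfold QuasiStarInvertible
  constructor
  · intro h Q hQ
    have h1 : (1 : K) ∈ stableOp star (1 : Submodule D K) := by
      rw [mem_stable_iff hs]
      intro Q hQ
      exact ⟨1, fun h => hQ.2.1 ((Ideal.eq_top_iff_one _).2 h), by simp⟩
    rw [← h, mem_stable_iff hs] at h1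
    simpa using h1 Q hQ
  · intro h
    apply le_antisymm (stable_mul_div_le hs E)
    intro x hx
    rw [mem_stable_iff hs] at hx ⊢
    intro Q hQ
    obtain ⟨s, hsQ, h'⟩ := hx Q hQ
    obtain ⟨t, ht, h''⟩ := h Q hQ
    refine ⟨s * t, fun h => ((maximal_prime hs hQ).mem_or_mem h).elim hsQ ht, ?_⟩
    obtain ⟨d, hd⟩ := Submodule.mem_one.1 h'
    have : algebraMap D K (s * t) * x = d • algebraMap D K t := by
      rw [Algebra.smul_def, hd, map_mul]; ring
    rw [this]
    exact Submodule.smul_mem _ _ h''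

lemma noeth_finite {star : Submodule D K → Submodule D K} (hs : IsSemistarOperation star)
    (hN : StarNoetherian star) {I : Ideal D} (hI : I ≠ ⊥) :
    ∃ F : Ideal D, F ≠ ⊥ ∧ F.FG ∧ F ≤ I ∧ ∀ x ∈ I, algebraMap D K x ∈ star (idealExt K F) := by
  by_contra! hcon
  let T := {F : Ideal D // F ≠ ⊥ ∧ F.FG ∧ F ≤ I}
  have hstep : ∀ F : T, ∃ G : T, F.1 ≤ G.1 ∧
      ∃ x ∈ G.1, algebraMap D K x ∉ star (idealExt K F.1) := by
    rintro ⟨F, h1, h2, h3⟩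
    obtain ⟨x, hx, hx'⟩ := hcon F h1 h2 h3
    refine ⟨⟨F ⊔ Ideal.span {x}, fun h => h1 (le_bot_iff.1 (h ▸ le_sup_left)),
      Submodule.FG.sup h2 (Submodule.fg_span_singleton x), sup_le h3
        (by simpa [Ideal.span_le] using hx)⟩, le_sup_left, x,
        Ideal.mem_sup_right (Ideal.mem_span_singleton_self x), hx'⟩
  choose nx hnx using hstep
  obtain ⟨x0, hx0, h0⟩ := Submodule.exists_mem_ne_zero_of_ne_bot hI
  let F0 : T := ⟨Ideal.span {x0}, by simpa using h0,
        Submodule.fg_span_singleton _, by simpa [Ideal.span_le] using hx0⟩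
  let seq : ℕ → T := fun n => nx^[n] F0
  have hseq : ∀ n, seq (n + 1) = nx (seq n) := fun n => Function.iterate_succ_apply' _ _ _
  have hmono : Monotone fun n => (seq n).1 := monotone_nat_of_le_succ fun n => by
    rw [hseq]; exact (hnx _).1
  let c : ℕ →o Ideal D := ⟨fun n => Submodule.comap (Algebra.linearMap D K)
    (star (idealExt K (seq n).1)), fun m n h => Submodule.comap_mono
      (hs.mono (idealExt_ne_bot (seq m).2.1) (idealExt_ne_bot (seq n).2.1)
        (idealExt_mono (hmono h)))⟩
  have hle : ∀ n, (seq n).1 ≤ c n := fun n x hx =>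
    hs.le_star (idealExt_ne_bot (seq n).2.1) (mem_idealExt_iff.2 hx)
  have hcb : ∀ n, c n ≠ ⊥ := fun n h => (seq n).2.1 (le_bot_iff.1 ((hle n).trans h.le))
  obtain ⟨n, hn⟩ := hN c (by
    intro n
    refine ⟨hcb n, ?_⟩
    apply le_antisymm
    · have h1 : idealExt K (c n) ≤ star (idealExt K (seq n).1) := by
        intro y hy
        obtain ⟨x, hx, rfl⟩ := mem_idealExt_exists hy
        exact hx
      have h2 := hs.mono (idealExt_ne_bot (hcb n))
        (hs.ne_bot (idealExt_ne_bot (seq n).2.1)) h1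
      rw [hs.star_star (idealExt_ne_bot (seq n).2.1)] at h2
      exact Submodule.comap_mono h2
    · intro x hx
      exact hs.le_star (idealExt_ne_bot (hcb n)) (mem_idealExt_iff.2 hx))
  have h1 := hn (n + 1) (Nat.le_succ n)
  obtain ⟨x, hx, hx'⟩ := (hnx (seq n)).2
  rw [← hseq] at hx
  apply hx'
  have := hle _ hx
  rw [h1] at this
  exact this

lemma forward {star : Submodule D K → Submodule D K} (hs : IsSemistarOperation star)
    (hN : StarNoetherian star) (hP : StarPMD star) {P : Ideal D} (hPb : P ≠ ⊥) :
    QuasiStarInvertible (stableOp star) (idealExt K P) := by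
  have hv : ∀ Q, QuasiStarMaximal (finTypeOp star) Q →
      ∀ a b : D, ∃ s ∉ Q, a ∣ s * b ∨ b ∣ s * a := by
    intro Q hQ a b
    have := maximal_prime hs hQ
    obtain ⟨hd, hval⟩ := hP Q hQ
    rcases ValuationRing.dvd_total (algebraMap D (Localization.AtPrime Q) a)
      (algebraMap D (Localization.AtPrime Q) b) with h | h
    · obtain ⟨s, h1, h2⟩ := loc_dvd h
      exact ⟨s, h1, Or.inl h2⟩
    · obtain ⟨s, h1, h2⟩ := loc_dvd h
      exact ⟨s, h1, Or.inr h2⟩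
  obtain ⟨F, f1, f2, f3, f4⟩ := noeth_finite hs hN hPb
  have hloc : ∀ Q, QuasiStarMaximal (finTypeOp star) Q → ∀ x ∈ P, ∃ s ∉ Q, s * x ∈ F := by
    intro Q hQ x hx
    have hQp := maximal_prime hs hQ
    obtain ⟨f, hf, t, ht, hft⟩ := fg_principal hQp (hv Q hQ) f2
    have ht0 : t ≠ 0 := by rintro rfl; exact ht Q.zero_mem
    have hf0 : f ≠ 0 := by
      rintro rfl
      apply f1
      rw [eq_bot_iff]
      intro y hy
      have := hft y hy
      rw [zero_dvd_iff, mul_eq_zero] at this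
      exact this.resolve_left ht0
    obtain ⟨s, hsQ, h | h⟩ := hv Q hQ f x
    · exact ⟨s, hsQ, F.mem_of_dvd h hf⟩
    · obtain ⟨a, ha⟩ := h
      by_cases haQ : a ∈ Q
      · exfalso
        have h1 := scale_mem hs (G := Ideal.span {f}) f1 ht0
          (fun x hx => Ideal.mem_span_singleton.2 (hft x hx)) (f4 x hx)
        obtain ⟨z, hz, hz'⟩ := star_principal hs hf0 h1
        have e : algebraMap D K (t * s) = algebraMap D K a * z := by
          apply mul_left_cancel₀ (algMap_ne_zero (K := K) hf0)
          have : algebraMap D K f * algebraMap D K (t * s) =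
            algebraMap D K a * (algebraMap D K t * algebraMap D K x) := by
            rw [← map_mul, ← map_mul, ← map_mul]
            congr 1
            linear_combination t * ha
          rw [this, hz']
          ring
        have hts : t * s ∉ Q := fun h => (hQp.mem_or_mem h).elim ht hsQ
        have ha0 : a ≠ 0 := by
          rintro rfl
          rw [map_zero, zero_mul] at e
          apply hts
          rw [(map_eq_zero_iff _ (IsFractionRing.injective D K)).1 e]
          exact Q.zero_mem
        apply hts
        apply ((quasi_iff hs).1 hQ.1).2
        refine ⟨Ideal.span {a}, by simpa using ha0, Submodule.fg_span_singleton _,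
          by simpa [Ideal.span_le] using haQ, ?_⟩
        rw [e]
        rw [← idealExt_top] at hz
        exact scale_mem hs top_ne_bot ha0
          (fun x _ => Ideal.mem_span_singleton.2 (dvd_mul_right a x)) hz
      · refine ⟨a, haQ, ?_⟩
        rw [mul_comm a x, ← ha]
        exact F.mul_mem_left _ hf
  rw [invertible_iff hs]
  intro Q hQ
  have hQp := maximal_prime hs hQ
  obtain ⟨f, hf, t, ht, hft⟩ := fg_principal hQp (hv Q hQ) f2
  have ht0 : t ≠ 0 := by rintro rfl; exact ht Q.zero_mem
  have hf0 : f ≠ 0 := by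
    rintro rfl
    apply f1
    rw [eq_bot_iff]
    intro y hy
    have := hft y hy
    rw [zero_dvd_iff, mul_eq_zero] at this
    exact this.resolve_left ht0
  refine ⟨t, ht, ?_⟩
  have e : algebraMap D K t = algebraMap D K f * (algebraMap D K t / algebraMap D K f) := by
    rw [mul_div_cancel₀ _ (algMap_ne_zero hf0)]
  rw [e]
  refine Submodule.mul_mem_mul (mem_idealExt_iff.2 (f3 hf)) ?_
  rw [Submodule.mem_div_iff_forall_mul_mem]
  intro y hy
  obtain ⟨p, hp, rfl⟩ := mem_idealExt_exists hy
  rw [mem_stable_iff hs]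
  intro Q' hQ'
  obtain ⟨s, hsQ, hsp⟩ := hloc Q' hQ' p hp
  refine ⟨s, hsQ, ?_⟩
  obtain ⟨d, hd⟩ := hft _ hsp
  refine Submodule.mem_one.2 ⟨d, ?_⟩
  have hd' := congrArg (algebraMap D K) hd
  simp only [map_mul] at hd'
  field_simp [algMap_ne_zero (K := K) hf0]
  linear_combination -hd'

/-- finite up to the stable closure -/
def StFin (star : Submodule D K → Submodule D K) (I : Ideal D) : Prop :=
  ∃ F : Ideal D, F.FG ∧ F ≤ I ∧ ∀ x ∈ I, ∀ Q, QuasiStarMaximal (finTypeOp star) Q →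
    ∃ s ∉ Q, s * x ∈ F

lemma one_not_mem {star : Submodule D K → Submodule D K} {Q : Ideal D}
    (hQ : QuasiStarMaximal (finTypeOp star) Q) : (1 : D) ∉ Q :=
  fun h => hQ.2.1 ((Ideal.eq_top_iff_one _).2 h)

lemma stfin_oka {star : Submodule D K → Submodule D K} (hs : IsSemistarOperation star) :
    Ideal.IsOka (StFin star) where
  top := ⟨⊤, ⟨{1}, by simp⟩, le_rfl, fun x _ Q hQ =>
    ⟨1, one_not_mem hQ, trivial⟩⟩
  oka := by
    rintro I a ⟨F, f1, f2, f3⟩ ⟨G, g1, g2, g3⟩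
    -- split off the part of `F` in `I`
    have hsplit : ∃ F0 : Ideal D, F0.FG ∧ F0 ≤ I ∧ F ≤ F0 ⊔ Ideal.span {a} := by
      clear f3
      induction F, f1 using Submodule.fg_induction with
      | singleton x =>
        obtain ⟨i, hi, r, hr, e⟩ := Submodule.mem_sup.1 (f2 (Submodule.mem_span_singleton_self x))
        refine ⟨Ideal.span {i}, Submodule.fg_span_singleton _, by simpa [Ideal.span_le] using hi, ?_⟩
        rw [Submodule.span_singleton_le_iff_mem, ← e]
        exact Ideal.add_mem _ (Ideal.mem_sup_left (Ideal.mem_span_singleton_self i))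
          (Ideal.mem_sup_right hr)
      | sup A B _ _ ihA ihB =>
        obtain ⟨A0, a1, a2, a3⟩ := ihA (le_sup_left.trans f2)
        obtain ⟨B0, b1, b2, b3⟩ := ihB (le_sup_right.trans f2)
        refine ⟨A0 ⊔ B0, Submodule.FG.sup a1 b1, sup_le a2 b2, sup_le ?_ ?_⟩
        · exact a3.trans (sup_le_sup_right le_sup_left _)
        · exact b3.trans (sup_le_sup_right le_sup_right _)
    obtain ⟨F0, h1, h2, h3⟩ := hsplit
    refine ⟨F0 ⊔ Ideal.span {a} * G, Submodule.FG.sup h1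
      ((Submodule.fg_span_singleton a).mul g1), sup_le h2 ?_, ?_⟩
    · rw [Ideal.span_singleton_mul_le_iff]
      intro z hz
      have := Ideal.mem_colon_span_singleton.1 (g2 hz)
      rwa [mul_comm]
    · intro x hx Q hQ
      obtain ⟨s, hsQ, hsx⟩ := f3 x (Ideal.mem_sup_left hx) Q hQ
      obtain ⟨i, hi, r, hr, e⟩ := Submodule.mem_sup.1 (h3 hsx)
      obtain ⟨c, rfl⟩ := Ideal.mem_span_singleton.1 hr
      have hc : c ∈ I.colon (Ideal.span {a} : Ideal D) := by
        rw [Ideal.mem_colon_span_singleton]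
        have : c * a = s * x - i := by rw [← e]; ring
        rw [this]
        exact I.sub_mem (I.mul_mem_left _ hx) (h2 hi)
      obtain ⟨t, ht, htc⟩ := g3 c hc Q hQ
      refine ⟨t * s, fun h => ((maximal_prime hs hQ).mem_or_mem h).elim ht hsQ, ?_⟩
      have : t * s * x = t * i + a * (t * c) := by
        rw [mul_assoc, ← e]; ring
      rw [this]
      exact Ideal.add_mem _ (Ideal.mem_sup_left (F0.mul_mem_left _ hi))
        (Ideal.mem_sup_right (Ideal.mul_mem_mul (Ideal.mem_span_singleton_self a) htc))

lemma exists_fg_notin {star : Submodule D K → Submodule D K} (hs : IsSemistarOperation star)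
    {J : Ideal D} (hJ : J ≠ ⊥) (h : ∀ Q, QuasiStarMaximal (finTypeOp star) Q → ¬ J ≤ Q) :
    SCl star J 1 := by
  by_contra h1
  obtain ⟨Q, hQ, hle⟩ := exists_maximal hs hJ h1
  exact h Q hQ hle

lemma quasiPrime_of_le {star : Submodule D K → Submodule D K} (hs : IsSemistarOperation star)
    {P Q : Ideal D} (hP : P.IsPrime) (hPb : P ≠ ⊥) (hQ : QuasiStarMaximal (finTypeOp star) Q)
    (hle : P ≤ Q) : QuasiStarPrime (stableOp star) P := by
  refine ⟨hP, hPb, ?_⟩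
  ext x
  constructor
  · intro hx
    obtain ⟨s, hsQ, h⟩ := (mem_stable_iff hs).1 hx Q hQ
    rw [Algebra.linearMap_apply, ← map_mul, mem_idealExt_iff] at h
    exact (hP.mem_or_mem h).resolve_left fun h => hsQ (hle h)
  · intro hx
    refine (mem_stable_iff hs).2 fun Q hQ => ⟨1, one_not_mem hQ, ?_⟩
    rw [map_one, one_mul]
    exact mem_idealExt_iff.2 hx

lemma exists_fg_mul {P : Ideal D} {Z : Submodule D K} {G : Ideal D} (hG : G.FG)
    (h : ∀ x ∈ G, algebraMap D K x ∈ idealExt K P * Z) :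
    ∃ F : Ideal D, F.FG ∧ F ≤ P ∧ ∀ x ∈ G, algebraMap D K x ∈ idealExt K F * Z := by
  have key : ∀ y ∈ idealExt K P * Z, ∃ F : Ideal D, F.FG ∧ F ≤ P ∧ y ∈ idealExt K F * Z := by
    intro y hy
    induction hy using Submodule.mul_induction_on' with
    | mem_mul_mem m hm z hz =>
      obtain ⟨p, hp, rfl⟩ := mem_idealExt_exists hm
      exact ⟨Ideal.span {p}, Submodule.fg_span_singleton _, by simpa [Ideal.span_le] using hp,
        Submodule.mul_mem_mul (mem_idealExt_iff.2 (Ideal.mem_span_singleton_self p)) hz⟩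
    | add x _ y _ hx hy =>
      obtain ⟨A, a1, a2, a3⟩ := hx
      obtain ⟨B, b1, b2, b3⟩ := hy
      exact ⟨A ⊔ B, Submodule.FG.sup a1 b1, sup_le a2 b2, Submodule.add_mem _
        (mul_le_mul' (idealExt_mono le_sup_left) le_rfl a3)
        (mul_le_mul' (idealExt_mono le_sup_right) le_rfl b3)⟩
  induction G, hG using Submodule.fg_induction with
  | singleton x =>
    obtain ⟨F, f1, f2, f3⟩ := key _ (h x (Submodule.mem_span_singleton_self x))
    refine ⟨F, f1, f2, ?_⟩
    intro y hy
    obtain ⟨c, rfl⟩ := Submodule.mem_span_singleton.1 hy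
    rw [smul_eq_mul, map_mul, ← Algebra.smul_def]
    exact Submodule.smul_mem _ _ f3
  | sup A B _ _ ihA ihB =>
    obtain ⟨A0, a1, a2, a3⟩ := ihA fun x hx => h x (Submodule.mem_sup_left hx)
    obtain ⟨B0, b1, b2, b3⟩ := ihB fun x hx => h x (Submodule.mem_sup_right hx)
    refine ⟨A0 ⊔ B0, Submodule.FG.sup a1 b1, sup_le a2 b2, ?_⟩
    intro x hx
    obtain ⟨y, hy, z, hz, rfl⟩ := Submodule.mem_sup.1 hx
    rw [map_add]
    exact Submodule.add_mem _
        (mul_le_mul' (idealExt_mono le_sup_left) le_rfl (a3 y hy))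
        (mul_le_mul' (idealExt_mono le_sup_right) le_rfl (b3 z hz))

/-- an element of `F (D^~ : P)` multiplies `P` into `F D_Q` -/
lemma mul_mem_local {star : Submodule D K → Submodule D K} (hs : IsSemistarOperation star)
    {P F Q : Ideal D} (hQ : QuasiStarMaximal (finTypeOp star) Q) {y : K}
    (hy : y ∈ idealExt K F * (stableOp star 1 / idealExt K P)) {x : D} (hx : x ∈ P) :
    ∃ s ∉ Q, algebraMap D K s * (y * algebraMap D K x) ∈ idealExt K F := by
  have hQp := maximal_prime hs hQ
  suffices y * algebraMap D K x ∈ extendToPrime Q (idealExt K F) from (mem_extend_iff hQp).1 this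
  induction hy using Submodule.mul_induction_on' with
  | mem_mul_mem m hm z hz =>
    have h1 := hz _ (mem_idealExt_iff.2 hx)
    obtain ⟨s, hsQ, h⟩ := (mem_stable_iff hs).1 h1 Q hQ
    obtain ⟨d, hd⟩ := Submodule.mem_one.1 h
    refine (mem_extend_iff hQp).2 ⟨s, hsQ, ?_⟩
    have : algebraMap D K s * (m * z * algebraMap D K x) = d • m := by
      rw [Algebra.smul_def, hd]; ring
    rw [this]
    exact Submodule.smul_mem _ _ hm
  | add a _ b _ ha hb =>
    rw [add_mul]
    exact Submodule.add_mem _ ha hb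

lemma stfin_of_prime {star : Submodule D K → Submodule D K} (hs : IsSemistarOperation star)
    (hinv : ∀ P : Ideal D, QuasiStarPrime (stableOp star) P →
        QuasiStarInvertible (stableOp star) (idealExt K P)) (P : Ideal D) (hP : P.IsPrime) :
    StFin star P := by
  by_cases hPb : P = ⊥
  · subst hPb
    refine ⟨⊥, Submodule.fg_bot, le_rfl, ?_⟩
    intro x hx Q hQ
    exact ⟨1, one_not_mem hQ, by rwa [one_mul]⟩
  by_cases hle : ∃ Q, QuasiStarMaximal (finTypeOp star) Q ∧ P ≤ Q
  · obtain ⟨Q0, hQ0, hPQ⟩ := hle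
    have h := (invertible_iff hs _).1 (hinv P (quasiPrime_of_le hs hP hPb hQ0 hPQ))
    let J : Ideal D := Submodule.comap (Algebra.linearMap D K)
      (idealExt K P * (stableOp star 1 / idealExt K P))
    have hJb : J ≠ ⊥ := by
      obtain ⟨t, ht, ht'⟩ := h Q0 hQ0
      intro hb
      have : t ∈ J := ht'
      rw [hb, Submodule.mem_bot] at this
      exact ht (this ▸ Q0.zero_mem)
    have h1 : SCl star J 1 := exists_fg_notin hs hJb fun Q hQ hle => by
      obtain ⟨t, ht, ht'⟩ := h Q hQ
      exact ht (hle ht')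
    obtain ⟨G, g1, g2, g3, g4⟩ := h1
    obtain ⟨F, f1, f2, f3⟩ := exists_fg_mul g2 (fun x hx => g3 hx)
    refine ⟨F, f1, f2, ?_⟩
    intro x hx Q hQ
    have hG : ¬ G ≤ Q := not_le_of_one hs hQ ⟨G, g1, g2, le_rfl, g4⟩
    obtain ⟨j, hj, hjQ⟩ := Set.not_subset.1 hG
    obtain ⟨s, hsQ, h⟩ := mul_mem_local hs hQ (f3 j hj) hx
    rw [← map_mul, ← map_mul, mem_idealExt_iff, ← mul_assoc] at h
    exact ⟨s * j, fun h => ((maximal_prime hs hQ).mem_or_mem h).elim hsQ hjQ, h⟩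
  · push Not at hle
    obtain ⟨F, f1, f2, f3, f4⟩ := exists_fg_notin hs hPb hle
    refine ⟨F, f2, f3, ?_⟩
    intro x hx Q hQ
    have hF : ¬ F ≤ Q := not_le_of_one hs hQ ⟨F, f1, f2, le_rfl, f4⟩
    obtain ⟨j, hj, hjQ⟩ := Set.not_subset.1 hF
    exact ⟨j, hjQ, F.mul_mem_right _ hj⟩

lemma stfin_all {star : Submodule D K → Submodule D K} (hs : IsSemistarOperation star)
    (hinv : ∀ P : Ideal D, QuasiStarPrime (stableOp star) P →
        QuasiStarInvertible (stableOp star) (idealExt K P)) (I : Ideal D) : StFin star I := by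
  refine (stfin_oka hs).forall_of_forall_prime' ?_ (stfin_of_prime hs hinv) I
  rintro C hC hch I0 hI0 ⟨F, f1, f2, f3⟩
  obtain ⟨I, hI, hFI⟩ := exists_of_chain hch ⟨I0, hI0⟩ f1 f2
  exact ⟨I, hI, F, f1, hFI, fun x hx => f3 x (le_sSup hI hx)⟩

lemma noeth_of_inv {star : Submodule D K → Submodule D K} (hs : IsSemistarOperation star)
    (hinv : ∀ P : Ideal D, QuasiStarPrime (stableOp star) P →
        QuasiStarInvertible (stableOp star) (idealExt K P)) : StarNoetherian star := by
  intro c hc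
  obtain ⟨F, f1, f2, f3⟩ := stfin_all hs hinv (⨆ n, c n)
  obtain ⟨_, ⟨n, rfl⟩, hFn⟩ := exists_of_chain (c := Set.range c)
    (by
      rintro _ ⟨i, rfl⟩ _ ⟨j, rfl⟩ _
      exact (le_total i j).imp (fun h => c.monotone h) (fun h => c.monotone h)) ⟨_, 0, rfl⟩ f1 f2
  refine ⟨n, fun m hm => le_antisymm ?_ (c.monotone hm)⟩
  intro x hx
  by_cases h0 : x = 0
  · subst h0; exact Submodule.zero_mem _
  let J : Ideal D := (c n).colon (Ideal.span {x} : Ideal D)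
  have hmem : ∀ j, j ∈ J ↔ j * x ∈ c n := fun j => Ideal.mem_colon_span_singleton
  have hJb : J ≠ ⊥ := by
    intro hb
    apply (hc n).1
    rw [eq_bot_iff, ← hb]
    exact fun j hj => (hmem j).2 (Ideal.mul_mem_right _ _ hj)
  have h1 : SCl star J 1 := exists_fg_notin hs hJb fun Q hQ hle => by
    obtain ⟨s, hsQ, h⟩ := f3 x ((le_iSup c m) hx) Q hQ
    exact hsQ (hle ((hmem s).2 (hFn h)))
  obtain ⟨G, g1, g2, g3, g4⟩ := h1
  have := scale_mem hs (G := c n) g1 h0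
    (fun j hj => by rw [mul_comm]; exact (hmem j).1 (g3 hj)) g4
  rw [map_one, mul_one] at this
  rw [← (hc n).2]
  exact this

lemma exists_local_gen {star : Submodule D K → Submodule D K} (hs : IsSemistarOperation star)
    {P Q : Ideal D} (hQ : QuasiStarMaximal (finTypeOp star) Q)
    (hinv : QuasiStarInvertible (stableOp star) (idealExt K P)) :
    ∃ f ∈ P, ∀ x ∈ P, ∃ s ∉ Q, f ∣ s * x := by
  have hQp := maximal_prime hs hQ
  obtain ⟨t, ht, ht'⟩ := (invertible_iff hs _).1 hinv Q hQ
  by_contra! hcon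
  -- every product lies in `Q D_Q`
  have : algebraMap D K t ∈ extendToPrime Q (idealExt K Q) := by
    generalize algebraMap D K t = y at ht'
    induction ht' using Submodule.mul_induction_on' with
    | mem_mul_mem m hm z hz =>
      obtain ⟨f, hf, rfl⟩ := mem_idealExt_exists hm
      obtain ⟨x, hx, hfx⟩ := hcon f hf
      obtain ⟨s, hsQ, h⟩ := (mem_stable_iff hs).1 (hz _ (mem_idealExt_iff.2 hf)) Q hQ
      obtain ⟨d, hd⟩ := Submodule.mem_one.1 h
      refine (mem_extend_iff hQp).2 ⟨s, hsQ, ?_⟩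
      rw [mul_comm (algebraMap D K f), ← hd, mem_idealExt_iff]
      by_contra hdQ
      obtain ⟨s', hsQ', h'⟩ := (mem_stable_iff hs).1 (hz _ (mem_idealExt_iff.2 hx)) Q hQ
      obtain ⟨d', hd'⟩ := Submodule.mem_one.1 h'
      apply hfx (s' * d) (fun h => (hQp.mem_or_mem h).elim hsQ' hdQ)
      refine ⟨s * d', ?_⟩
      apply IsFractionRing.injective D K
      simp only [map_mul]
      rw [hd, hd']
      ring
    | add a _ b _ ha hb => exact Submodule.add_mem _ ha hb
  obtain ⟨s, hsQ, h⟩ := (mem_extend_iff hQp).1 this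
  rw [← map_mul, mem_idealExt_iff] at h
  exact (hQp.mem_or_mem h).elim hsQ ht

lemma pmd_of_inv {star : Submodule D K → Submodule D K} (hs : IsSemistarOperation star)
    (hinv : ∀ P : Ideal D, QuasiStarPrime (stableOp star) P →
        QuasiStarInvertible (stableOp star) (idealExt K P)) : StarPMD star := by
  intro Q _ hQ
  refine ⟨inferInstance, ?_⟩
  have : IsPrincipalIdealRing (Localization.AtPrime Q) := by
    apply IsPrincipalIdealRing.of_prime
    intro p hp
    by_cases hpb : p = ⊥
    · subst hpb; infer_instance
    let P : Ideal D := p.comap (algebraMap D (Localization.AtPrime Q))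
    have hP : P.IsPrime := Ideal.comap_isPrime _ _
    have hPQ : P ≤ Q := by
      intro x hx
      by_contra hxQ
      exact hp.ne_top (Ideal.eq_top_of_isUnit_mem _ hx
        (IsLocalization.map_units _ (⟨x, hxQ⟩ : Q.primeCompl)))
    have hPb : P ≠ ⊥ := by
      intro hb
      apply hpb
      rw [← IsLocalization.map_under Q.primeCompl (Localization.AtPrime Q) p]
      change Ideal.map _ P = ⊥
      rw [hb, Ideal.map_bot]
    obtain ⟨f, hf, h⟩ := exists_local_gen hs hQ
      (hinv P (quasiPrime_of_le hs hP hPb hQ hPQ))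
    refine ⟨algebraMap D _ f, ?_⟩
    apply le_antisymm
    · rw [← IsLocalization.map_under Q.primeCompl (Localization.AtPrime Q) p, Ideal.map_le_iff_le_comap]
      intro x hx
      obtain ⟨s, hsQ, d, hd⟩ := h x hx
      have hu := IsLocalization.map_units (Localization.AtPrime Q) (⟨s, hsQ⟩ : Q.primeCompl)
      rw [Ideal.mem_comap]
      change _ ∈ Ideal.span _
      rw [Ideal.mem_span_singleton, ← hu.dvd_mul_left, ← map_mul, hd, map_mul]
      exact dvd_mul_right _ _
    · rw [Submodule.span_singleton_le_iff_mem]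
      exact hf
  exact ValuationRing.iff_local_bezout_domain.2 ⟨inferInstance, inferInstance⟩

end Helpers

section Statement

variable {D : Type*} [CommRing D] [IsDomain D]
variable {K : Type*} [Field K] [Algebra D K] [IsFractionRing D K]

/-- `D` an integral domain, `⋆` a semistar operation on `D`. Then `D`
is a ⋆-Dedekind domain iff every nonzero quasi-⋆̃-prime ideal of `D` is
quasi-⋆̃-invertible. -/
theorem starDedekind_iff_quasiStablePrimes_invertible
    (star : Submodule D K → Submodule D K) (hstar : IsSemistarOperation star) :
    StarDedekind star ↔
      ∀ P : Ideal D, QuasiStarPrime (stableOp star) P →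
        QuasiStarInvertible (stableOp star) (idealExt K P) := by
  constructor
  · rintro ⟨hN, hP⟩ P hPP
    exact forward hstar hN hP hPP.2.1
  · intro h
    exact ⟨noeth_of_inv hstar h, pmd_of_inv hstar h⟩

end Statement
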